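/- For every z ∈ X and every v ∈ ℝ^q, the limit as δ → 0⁺ of (P_X(z + δv) − z)/δ exists, and it equals the unique nearest point to v in the tangent cone T_zX (the closure of {λ(y − z) : λ ≥ 0, y ∈ X}); that is, the directional-derivative definition of Π_X(z, v) coincides with the metric projection of v onto T_zX. -/

import Mathlib

/-!
Let `S δ = {u | z + δ • u ∈ X}`. Rescaling by `δ⁻¹` turns `P_X (z + δ • v)` into the nearest point
to `v` in `S δ`. By convexity, each point of the cone `C` spanned by `X - z` lies in `S δ` for all
small `δ > 0`, while `S δ ⊆ C` always. Hence these nearest points form a minimizing sequence for the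
distance from `v` to the tangent cone `closure C`, and the variational inequality at the nearest
point makes every minimizing sequence converge to it.
-/

open Set Filter

/-- The nearest point to `v` in a set `K` (junk value `0` if no nearest point exists). -/
noncomputable def nearestPoint {E : Type*} [NormedAddCommGroup E] [InnerProductSpace ℝ E]
    (K : Set E) (v : E) : E := by
  classical exact if h : ∃ w ∈ K, ∀ u ∈ K, ‖v - w‖ ≤ ‖v - u‖ then h.choose else 0

/-- The tangent cone to a convex set `X` at `z`: the closure of
`{λ • (y − z) : λ ≥ 0, y ∈ X}`. -/
def tangentConeOf {E : Type*} [NormedAddCommGroup E] [InnerProductSpace ℝ E]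
    (X : Set E) (z : E) : Set E :=
  closure {w | ∃ l : ℝ, 0 ≤ l ∧ ∃ y ∈ X, w = l • (y - z)}

/-- `Π_X(z, v)`: the nearest point to `v` in the tangent cone `T_z X`. -/
noncomputable def piProj {E : Type*} [NormedAddCommGroup E] [InnerProductSpace ℝ E]
    (X : Set E) (z v : E) : E :=
  nearestPoint (tangentConeOf X z) v

/-- `w` is a nearest point to `v` in `K`: the relation that `nearestPoint K v` satisfies whenever
some `w` does. -/
def IsNearestPoint {E : Type*} [NormedAddCommGroup E] (K : Set E) (v w : E) : Prop :=
  w ∈ K ∧ ∀ u ∈ K, ‖v - w‖ ≤ ‖v - u‖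

/-- The cone of feasible directions of `X` at `z`, whose closure is `tangentConeOf X z`. -/
def radialCone {E : Type*} [AddCommGroup E] [Module ℝ E] (X : Set E) (z : E) : Set E :=
  {w | ∃ l : ℝ, 0 ≤ l ∧ ∃ y ∈ X, w = l • (y - z)}

section RadialCone

variable {E : Type*} [AddCommGroup E] [Module ℝ E] {X : Set E} {z u : E}

lemma zero_mem_radialCone (hX : X.Nonempty) : 0 ∈ radialCone X z :=
  let ⟨y, hy⟩ := hX
  ⟨0, le_rfl, y, hy, (zero_smul ℝ _).symm⟩

lemma mem_radialCone_of_add_smul_mem {δ : ℝ} (hδ : 0 < δ) (hu : z + δ • u ∈ X) :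
    u ∈ radialCone X z :=
  ⟨δ⁻¹, (inv_pos.2 hδ).le, z + δ • u, hu, by rw [add_sub_cancel_left, inv_smul_smul₀ hδ.ne']⟩

lemma eventually_add_smul_mem_of_mem_radialCone (hX : Convex ℝ X) (hz : z ∈ X)
    (hu : u ∈ radialCone X z) : ∀ᶠ δ : ℝ in nhdsWithin 0 (Ioi 0), z + δ • u ∈ X := by
  obtain ⟨l, hl, y, hy, rfl⟩ := hu
  have hsmall : ∀ᶠ δ : ℝ in nhdsWithin 0 (Ioi 0), δ * l < 1 :=
    nhdsWithin_le_nhds <| (continuous_mul_const l).continuousAt.eventually_lt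
      continuousAt_const (by simp)
  filter_upwards [hsmall, self_mem_nhdsWithin] with δ hδl hδ
  rw [smul_smul]
  exact hX.add_smul_sub_mem hz hy ⟨mul_nonneg (mem_Ioi.1 hδ).le hl, hδl.le⟩

lemma convex_radialCone (hX : Convex ℝ X) (hz : z ∈ X) : Convex ℝ (radialCone X z) := by
  intro u hu w hw a b ha hb hab
  have hSconv (δ : ℝ) : Convex ℝ {u | z + δ • u ∈ X} :=
    (hX.translate_preimage_right z).smul_preimage δ
  have hmem : ∀ᶠ δ : ℝ in nhdsWithin 0 (Ioi 0), z + δ • (a • u + b • w) ∈ X := by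
    filter_upwards [eventually_add_smul_mem_of_mem_radialCone hX hz hu,
      eventually_add_smul_mem_of_mem_radialCone hX hz hw] with δ hδu hδw
    exact hSconv δ hδu hδw ha hb hab
  obtain ⟨δ, hδmem, hδ⟩ := (hmem.and self_mem_nhdsWithin).exists
  exact mem_radialCone_of_add_smul_mem hδ hδmem

end RadialCone

lemma isNearestPoint_iff_norm_eq_iInf {E : Type*} [NormedAddCommGroup E] {K : Set E} {v w : E} :
    IsNearestPoint K v w ↔ w ∈ K ∧ ‖v - w‖ = ⨅ u : K, ‖v - u‖ := by
  refine and_congr_right fun hw => ?_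
  have : Nonempty K := ⟨⟨w, hw⟩⟩
  have hbdd : BddBelow (range fun u : K => ‖v - u‖) :=
    ⟨0, forall_mem_range.2 fun _ => norm_nonneg _⟩
  exact ⟨fun h => le_antisymm (le_ciInf fun u => h u u.2) (ciInf_le hbdd ⟨w, hw⟩),
    fun h u hu => h.trans_le (ciInf_le hbdd ⟨u, hu⟩)⟩

namespace IsNearestPoint

lemma inv_smul_sub {E : Type*} [NormedAddCommGroup E] [NormedSpace ℝ E] {X : Set E} {z v p : E}
    {δ : ℝ} (hδ : 0 < δ) (hp : IsNearestPoint X (z + δ • v) p) :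
    IsNearestPoint {u | z + δ • u ∈ X} v (δ⁻¹ • (p - z)) := by
  have hscale (u : E) : ‖z + δ • v - (z + δ • u)‖ = δ * ‖v - u‖ := by
    rw [add_sub_add_left_eq_sub, ← smul_sub, norm_smul, Real.norm_of_nonneg hδ.le]
  have hback : z + δ • δ⁻¹ • (p - z) = p := by
    rw [smul_inv_smul₀ hδ.ne', add_sub_cancel]
  refine ⟨by simpa only [mem_ofPred_eq, hback] using hp.1, fun u hu => ?_⟩
  refine le_of_mul_le_mul_left ?_ hδ
  rw [← hscale, ← hscale, hback]
  exact hp.2 _ hu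

variable {E : Type*} [NormedAddCommGroup E] [InnerProductSpace ℝ E] {K : Set E} {v w : E}

lemma inner_sub_sub_nonpos (hK : Convex ℝ K) (hw : IsNearestPoint K v w) {p : E} (hp : p ∈ K) :
    inner ℝ (v - w) (p - w) ≤ 0 :=
  (norm_eq_iInf_iff_real_inner_le_zero hK hw.1).1 (isNearestPoint_iff_norm_eq_iInf.1 hw).2 p hp

lemma norm_sub_sq_le (hK : Convex ℝ K) (hw : IsNearestPoint K v w) {p : E} (hp : p ∈ K) :
    ‖p - w‖ ^ 2 ≤ ‖v - p‖ ^ 2 - ‖v - w‖ ^ 2 := by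
  have hexpand := norm_sub_sq_real (v - w) (p - w)
  rw [sub_sub_sub_cancel_right] at hexpand
  linarith [hw.inner_sub_sub_nonpos hK hp]

lemma tendsto_of_tendsto_norm_sub {ι : Type*} {l : Filter ι} {p : ι → E} (hK : Convex ℝ K)
    (hw : IsNearestPoint K v w) (hp : ∀ᶠ i in l, p i ∈ K)
    (hlim : Tendsto (fun i => ‖v - p i‖) l (nhds ‖v - w‖)) : Tendsto p l (nhds w) := by
  have hgap : Tendsto (fun i => ‖v - p i‖ ^ 2 - ‖v - w‖ ^ 2) l (nhds 0) :=
    tendsto_sub_nhds_zero_iff.2 (hlim.pow 2)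
  have hsq : Tendsto (fun i => ‖p i - w‖ ^ 2) l (nhds 0) :=
    squeeze_zero' (.of_forall fun _ => by positivity)
      (hp.mono fun _ hi => hw.norm_sub_sq_le hK hi) hgap
  rw [tendsto_iff_norm_sub_tendsto_zero]
  simpa only [Real.sqrt_sq (norm_nonneg _), Real.sqrt_zero] using hsq.sqrt

lemma tendsto_of_eventually_mem {ι : Type*} {l : Filter ι} {S : ι → Set E} {p : ι → E}
    (hK : Convex ℝ K) (hw : IsNearestPoint (closure K) v w) (hSK : ∀ᶠ i in l, S i ⊆ K)
    (hKS : ∀ u ∈ K, ∀ᶠ i in l, u ∈ S i) (hp : ∀ᶠ i in l, IsNearestPoint (S i) v (p i)) :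
    Tendsto p l (nhds w) := by
  have hpK : ∀ᶠ i in l, p i ∈ closure K := by
    filter_upwards [hSK, hp] with i hi hpi using subset_closure (hi hpi.1)
  refine hw.tendsto_of_tendsto_norm_sub hK.closure hpK (tendsto_order.2 ⟨fun b hb => ?_,
    fun b hb => ?_⟩)
  · exact hpK.mono fun i hi => hb.trans_le (hw.2 _ hi)
  · obtain ⟨u, hub, huK⟩ := mem_closure_iff.1 hw.1 {u | ‖v - u‖ < b}
      (isOpen_lt (by fun_prop) continuous_const) hb
    filter_upwards [hKS u huK, hp] with i hui hpi using (hpi.2 u hui).trans_lt hub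

lemma tendsto_inv_smul_sub {X : Set E} {z : E} {P : ℝ → E} (hX : Convex ℝ X) (hz : z ∈ X)
    (hw : IsNearestPoint (tangentConeOf X z) v w)
    (hP : ∀ᶠ δ in nhdsWithin 0 (Ioi 0), IsNearestPoint X (z + δ • v) (P δ)) :
    Tendsto (fun δ => δ⁻¹ • (P δ - z)) (nhdsWithin 0 (Ioi 0)) (nhds w) := by
  refine tendsto_of_eventually_mem (S := fun δ => {u | z + δ • u ∈ X})
    (convex_radialCone hX hz) hw ?_
    (fun u hu => eventually_add_smul_mem_of_mem_radialCone hX hz hu) ?_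
  · filter_upwards [self_mem_nhdsWithin] with δ hδ u hu
      using mem_radialCone_of_add_smul_mem hδ hu
  · filter_upwards [self_mem_nhdsWithin, hP] with δ hδ hPδ using hPδ.inv_smul_sub hδ

end IsNearestPoint

section Hilbert

variable {E : Type*} [NormedAddCommGroup E] [InnerProductSpace ℝ E]

lemma exists_isNearestPoint {K : Set E} (hne : K.Nonempty) (hcomplete : IsComplete K)
    (hK : Convex ℝ K) (v : E) : ∃ w, IsNearestPoint K v w := by
  obtain ⟨w, hw, hinf⟩ := exists_norm_eq_iInf_of_complete_convex hne hcomplete hK v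
  exact ⟨w, isNearestPoint_iff_norm_eq_iInf.2 ⟨hw, hinf⟩⟩

lemma isNearestPoint_nearestPoint {K : Set E} {v : E} (h : ∃ w, IsNearestPoint K v w) :
    IsNearestPoint K v (nearestPoint K v) := by
  unfold IsNearestPoint at h
  rw [nearestPoint, dif_pos h]
  exact h.choose_spec

lemma isNearestPoint_piProj [CompleteSpace E] {X : Set E} {z : E} (hX : Convex ℝ X) (hz : z ∈ X)
    (v : E) : IsNearestPoint (tangentConeOf X z) v (piProj X z v) :=
  isNearestPoint_nearestPoint <|
    exists_isNearestPoint ⟨0, subset_closure (zero_mem_radialCone ⟨z, hz⟩)⟩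
      isClosed_closure.isComplete (convex_radialCone hX hz).closure v

theorem stmt4_general [CompleteSpace E] {X : Set E} (hXcl : IsClosed X) (hXconv : Convex ℝ X)
    {z : E} (hz : z ∈ X) (v : E) :
    piProj X z v ∈ tangentConeOf X z ∧
    (∀ u ∈ tangentConeOf X z, ‖v - piProj X z v‖ ≤ ‖v - u‖) ∧
    Tendsto (fun δ : ℝ => δ⁻¹ • (nearestPoint X (z + δ • v) - z))
      (nhdsWithin 0 (Ioi 0)) (nhds (piProj X z v)) := by
  have hw := isNearestPoint_piProj hXconv hz v
  exact ⟨hw.1, hw.2, hw.tendsto_inv_smul_sub hXconv hz <| .of_forall fun δ =>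
    isNearestPoint_nearestPoint <|
      exists_isNearestPoint ⟨z, hz⟩ hXcl.isComplete hXconv (z + δ • v)⟩

end Hilbert

/-- For `z ∈ X` and `v ∈ ℝ^q`, the limit of `(P_X(z + δv) − z)/δ` as `δ → 0⁺` exists and
equals the metric projection of `v` onto the tangent cone `T_z X`; i.e. the
directional-derivative definition of `Π_X(z,v)` coincides with the nearest point to `v`
in `T_z X`. -/
theorem stmt4 (q : ℕ) (hq : 0 < q) (X : Set (EuclideanSpace ℝ (Fin q)))
    (hXne : X.Nonempty) (hXcl : IsClosed X) (hXconv : Convex ℝ X)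
    (z : EuclideanSpace ℝ (Fin q)) (hz : z ∈ X)
    (v : EuclideanSpace ℝ (Fin q)) :
    piProj X z v ∈ tangentConeOf X z ∧
    (∀ u ∈ tangentConeOf X z, ‖v - piProj X z v‖ ≤ ‖v - u‖) ∧
    Tendsto (fun δ : ℝ => δ⁻¹ • (nearestPoint X (z + δ • v) - z))
      (nhdsWithin 0 (Ioi 0)) (nhds (piProj X z v)) :=
  stmt4_general hXcl hXconv hz v
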